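/- Let 1 < p < 2 and n ≥ 1. Let γ(t) = exp(p t^{p−1}) ∫_t^∞ exp(−p s^{p−1}) ds for t ≥ 0, and let H : [γ(0), ∞) → [0,∞) be the inverse of the strictly increasing function t ↦ t + γ(t). Define the kernel α(λ) = (1/2)·γ(H(λ))^{−2}·γ′(H(λ))·H′(λ)·λ² for λ ≥ γ(0) and α(λ) = 0 for 0 < λ < γ(0), and set U(x,y) = ∫₀^∞ α(λ) u₁(x/λ, y/λ) dλ + γ(0)/2. Then U admits the explicit formula: U(x,y) = (|y|² − |x|²)/(2γ(0)) + γ(0)/2 if |x|+|y| ≤ γ(0), and U(x,y) = |y| − H(|x|+|y|)^p − p·H(|x|+|y|)^{p−1}·(|x| − H(|x|+|y|)) if |x|+|y| > γ(0). -/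

import Mathlib

/-! Write `φ t = t + γ t`, with inverse `H`. The substitution `l = φ t` turns the integral defining
`U` into an integral over `t > 0` in which `deriv H (φ t)` cancels against `φ' t`; what remains is
`γ' / (2 γ²) · V`, where `V t = φ² u₁(x/φ, y/φ)` equals `|y|² - |x|²` once `|x| + |y| ≤ φ t` and
`φ² - 2|x|φ` before that.

Everything rests on the differential equation `γ' t = p (p - 1) t ^ (p - 2) γ t - 1` on `t > 0`
(`hasDerivAt_gam`) and on the bound `1 ≤ p (p - 1) t ^ (p - 2) γ t` (`one_le_gam_mul`). The latter
gives both `γ' ≥ 0`, from which all integrability follows, and `γ → ∞`. Hence the tail integral of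
`γ' / γ²` from `T` is `1 / γ T` (`tail_integral`), while the part over `0 < t ≤ T` has an explicit
primitive obtained by integrating by parts (`head_integral`). With `T = H (|x| + |y|)` the boundary
terms at `T` cancel, because `φ² - 2|x|φ = |y|² - |x|²` when `φ = |x| + |y|`. -/

open Real MeasureTheory Set

/-- The function `γ(t) = exp(p t^{p−1}) ∫_t^∞ exp(−p s^{p−1}) ds`. -/
noncomputable def gam (p : ℝ) (t : ℝ) : ℝ :=
  Real.exp (p * t ^ (p - 1)) * ∫ s in Ioi t, Real.exp (-p * s ^ (p - 1))

/-- Burkholder's simple function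
`u₁(x,y) = |y|² − |x|²` if `|x|+|y| ≤ 1`, and `1 − 2|x|` otherwise. -/
noncomputable def uOne {n : ℕ} (x y : EuclideanSpace ℝ (Fin n)) : ℝ :=
  if ‖x‖ + ‖y‖ ≤ 1 then ‖y‖ ^ 2 - ‖x‖ ^ 2 else 1 - 2 * ‖x‖

lemma continuous_rpow_sub_one {p : ℝ} (hp1 : 1 < p) : Continuous fun s : ℝ => s ^ (p - 1) :=
  Real.continuous_rpow_const (by linarith)

lemma continuous_kernel {p : ℝ} (hp1 : 1 < p) :
    Continuous fun s : ℝ => Real.exp (-p * s ^ (p - 1)) :=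
  Real.continuous_exp.comp (continuous_const.mul (continuous_rpow_sub_one hp1))

lemma integrableOn_kernel {p : ℝ} (hp1 : 1 < p) {t : ℝ} (ht : 0 ≤ t) :
    IntegrableOn (fun s : ℝ => Real.exp (-p * s ^ (p - 1))) (Ioi t) := by
  have h := integrableOn_rpow_mul_exp_neg_mul_rpow (p := p - 1) (s := 0) (b := p)
    (by norm_num) (by linarith) (by linarith)
  simp only [Real.rpow_zero, one_mul] at h
  exact h.mono_set (Ioi_subset_Ioi ht)

lemma gam_pos {p : ℝ} (hp1 : 1 < p) {t : ℝ} (ht : 0 ≤ t) : 0 < gam p t := by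
  refine mul_pos (Real.exp_pos _) ?_
  rw [setIntegral_pos_iff_support_of_nonneg_ae (ae_of_all _ fun s => (Real.exp_pos _).le)
    (integrableOn_kernel hp1 ht)]
  have : Function.support (fun s : ℝ => Real.exp (-p * s ^ (p - 1))) = univ := by
    ext s; simp [Real.exp_ne_zero]
  rw [this, univ_inter, Real.volume_Ioi]
  exact ENNReal.zero_lt_top

/-- `γ` expressed through an integral over a bounded interval, which makes its regularity plain. -/
lemma gam_eq {p : ℝ} (hp1 : 1 < p) {t : ℝ} (ht : 0 ≤ t) :
    gam p t = Real.exp (p * t ^ (p - 1)) * ((∫ s in Ioi (0 : ℝ), Real.exp (-p * s ^ (p - 1)))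
      - ∫ s in (0 : ℝ)..t, Real.exp (-p * s ^ (p - 1))) := by
  rw [gam, ← intervalIntegral.integral_interval_add_Ioi (integrableOn_kernel hp1 le_rfl)
    (integrableOn_kernel hp1 ht)]
  ring

lemma continuousOn_gam {p : ℝ} (hp1 : 1 < p) : ContinuousOn (gam p) (Ici 0) := by
  refine ContinuousOn.congr (Continuous.continuousOn ?_) (fun t ht => gam_eq hp1 ht)
  refine (Real.continuous_exp.comp (continuous_const.mul (continuous_rpow_sub_one hp1))).mul
    (continuous_const.sub ?_)
  exact intervalIntegral.continuous_primitive
    (fun a b => (continuous_kernel hp1).intervalIntegrable a b) 0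

lemma hasDerivAt_gam {p : ℝ} (hp1 : 1 < p) {t : ℝ} (ht : 0 < t) :
    HasDerivAt (gam p) (p * (p - 1) * t ^ (p - 2) * gam p t - 1) t := by
  have h1 : HasDerivAt (fun s : ℝ => ∫ u in (0 : ℝ)..s, Real.exp (-p * u ^ (p - 1)))
      (Real.exp (-p * t ^ (p - 1))) t :=
    ((continuous_kernel hp1).integral_hasStrictDerivAt 0 t).hasDerivAt
  have h2 : HasDerivAt (fun s : ℝ => s ^ (p - 1)) ((p - 1) * t ^ (p - 1 - 1)) t :=
    Real.hasDerivAt_rpow_const (Or.inl ht.ne')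
  have h3 := (h2.const_mul p).exp.mul (h1.const_sub
    (∫ s in Ioi (0 : ℝ), Real.exp (-p * s ^ (p - 1))))
  refine (h3.congr_of_eventuallyEq ?_).congr_deriv ?_
  · filter_upwards [Ioi_mem_nhds ht] with s hs using gam_eq hp1 (le_of_lt hs)
  · have h4 : Real.exp (p * t ^ (p - 1)) * Real.exp (-p * t ^ (p - 1)) = 1 := by
      rw [← Real.exp_add]; simp
    rw [gam_eq hp1 ht.le, show p - 1 - 1 = p - 2 by ring]
    linear_combination (-1 : ℝ) * h4

/-- Since `s ^ (p - 2) ≤ t ^ (p - 2)` for `s > t`, the tail integral of `exp (-p s ^ (p - 1))`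
dominates a multiple of that of the exact derivative of `-exp (-p s ^ (p - 1))`. -/
lemma one_le_gam_mul {p : ℝ} (hp1 : 1 < p) (hp2 : p < 2) {t : ℝ} (ht : 0 < t) :
    1 ≤ p * (p - 1) * t ^ (p - 2) * gam p t := by
  have hpp : 0 < p * (p - 1) := mul_pos (by linarith) (by linarith)
  have hd : ∀ s ∈ Ici t, HasDerivAt (fun s : ℝ => -Real.exp (-p * s ^ (p - 1)))
      (p * (p - 1) * s ^ (p - 2) * Real.exp (-p * s ^ (p - 1))) s := by
    intro s hs
    have hs0 : 0 < s := lt_of_lt_of_le ht hs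
    have h2 : HasDerivAt (fun s : ℝ => s ^ (p - 1)) ((p - 1) * s ^ (p - 1 - 1)) s :=
      Real.hasDerivAt_rpow_const (Or.inl hs0.ne')
    refine (h2.const_mul (-p)).exp.neg.congr_deriv ?_
    rw [show p - 1 - 1 = p - 2 by ring]; ring
  have hn : ∀ s ∈ Ioi t, 0 ≤ p * (p - 1) * s ^ (p - 2) * Real.exp (-p * s ^ (p - 1)) := by
    intro s hs
    have hs0 : 0 < s := lt_trans ht hs
    positivity
  have hl : Filter.Tendsto (fun s : ℝ => -Real.exp (-p * s ^ (p - 1))) Filter.atTop (nhds 0) := by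
    have h1 : Filter.Tendsto (fun s : ℝ => -p * s ^ (p - 1)) Filter.atTop Filter.atBot :=
      (tendsto_rpow_atTop (by linarith : 0 < p - 1)).const_mul_atTop_of_neg (by linarith)
    simpa using (Real.tendsto_exp_atBot.comp h1).neg
  have hint := integral_Ioi_of_hasDerivAt_of_nonneg' hd hn hl
  have hI := integrableOn_Ioi_deriv_of_nonneg' hd hn hl
  have hle : Real.exp (-p * t ^ (p - 1)) ≤
      p * (p - 1) * t ^ (p - 2) * ∫ s in Ioi t, Real.exp (-p * s ^ (p - 1)) := by
    have h0 : Real.exp (-p * t ^ (p - 1)) =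
        ∫ s in Ioi t, p * (p - 1) * s ^ (p - 2) * Real.exp (-p * s ^ (p - 1)) := by
      rw [hint]; ring
    rw [h0, ← integral_const_mul]
    refine setIntegral_mono_on hI ((integrableOn_kernel hp1 ht.le).const_mul _)
      measurableSet_Ioi fun s hs => ?_
    have : s ^ (p - 2) ≤ t ^ (p - 2) :=
      Real.rpow_le_rpow_of_nonpos ht (le_of_lt hs) (by linarith)
    gcongr
  have h4 : Real.exp (p * t ^ (p - 1)) * Real.exp (-p * t ^ (p - 1)) = 1 := by
    rw [← Real.exp_add]; simp
  have h5 := mul_le_mul_of_nonneg_left hle (Real.exp_pos (p * t ^ (p - 1))).le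
  rw [h4] at h5
  rw [gam]
  linarith

lemma tendsto_gam {p : ℝ} (hp1 : 1 < p) (hp2 : p < 2) :
    Filter.Tendsto (gam p) Filter.atTop Filter.atTop := by
  have hpp : 0 < p * (p - 1) := mul_pos (by linarith) (by linarith)
  have h : Filter.Tendsto (fun t : ℝ => (p * (p - 1))⁻¹ * t ^ (2 - p)) Filter.atTop Filter.atTop :=
    (tendsto_rpow_atTop (by linarith : 0 < 2 - p)).const_mul_atTop (inv_pos.2 hpp)
  refine Filter.tendsto_atTop_mono' _ ?_ h
  filter_upwards [Filter.eventually_gt_atTop 0] with t ht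
  have h1 := one_le_gam_mul hp1 hp2 ht
  have h2 : t ^ (2 - p) * t ^ (p - 2) = 1 := by
    rw [← Real.rpow_add ht]; simp
  have h3 := mul_le_mul_of_nonneg_left h1 (Real.rpow_nonneg ht.le (2 - p))
  rw [inv_mul_le_iff₀ hpp]
  calc t ^ (2 - p) ≤ t ^ (2 - p) * (p * (p - 1) * t ^ (p - 2) * gam p t) := by linarith
    _ = p * (p - 1) * gam p t * (t ^ (2 - p) * t ^ (p - 2)) := by ring
    _ = p * (p - 1) * gam p t := by rw [h2, mul_one]

/-- The derivative of `γ` at `t > 0`. -/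
noncomputable def dgam (p t : ℝ) : ℝ := p * (p - 1) * t ^ (p - 2) * gam p t - 1

lemma tail_hasDerivAt {p : ℝ} (hp1 : 1 < p) {t : ℝ} (ht : 0 < t) :
    HasDerivAt (fun s => -(gam p s)⁻¹) (dgam p t / gam p t ^ 2) t := by
  refine ((hasDerivAt_gam hp1 ht).inv (gam_pos hp1 ht.le).ne').neg.congr_deriv ?_
  rw [dgam]; ring

lemma tail_integral {p : ℝ} (hp1 : 1 < p) (hp2 : p < 2) {T : ℝ} (hT : 0 ≤ T) :
    IntegrableOn (fun t => dgam p t / gam p t ^ 2) (Ioi T) ∧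
      ∫ t in Ioi T, dgam p t / gam p t ^ 2 = (gam p T)⁻¹ := by
  have hc : ContinuousWithinAt (fun s => -(gam p s)⁻¹) (Ici T) T :=
    (((continuousOn_gam hp1 T hT).mono (Ici_subset_Ici.2 hT)).inv₀ (gam_pos hp1 hT).ne').neg
  have hd : ∀ t ∈ Ioi T, HasDerivAt (fun s => -(gam p s)⁻¹) (dgam p t / gam p t ^ 2) t :=
    fun t ht => tail_hasDerivAt hp1 (lt_of_le_of_lt hT ht)
  have hn : ∀ t ∈ Ioi T, 0 ≤ dgam p t / gam p t ^ 2 := fun t ht =>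
    div_nonneg (sub_nonneg.2 (one_le_gam_mul hp1 hp2 (lt_of_le_of_lt hT ht))) (sq_nonneg _)
  have hl : Filter.Tendsto (fun s => -(gam p s)⁻¹) Filter.atTop (nhds 0) := by
    simpa using (tendsto_gam hp1 hp2).inv_tendsto_atTop.neg
  refine ⟨integrableOn_Ioi_deriv_of_nonneg hc hd hn hl, ?_⟩
  rw [integral_Ioi_of_hasDerivAt_of_nonneg hc hd hn hl]
  ring

/-- Integration by parts with `φ = t + γ t`: the primitive is
`-(φ² - 2 a φ) / (2 γ) + (p - 1) t ^ p + t + γ t - a p t ^ (p - 1)`, whose second part is a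
primitive of `(φ - a) φ' / γ = (φ - a) p (p - 1) t ^ (p - 2)`. -/
lemma head_integral {p : ℝ} (hp1 : 1 < p) (hp2 : p < 2) (a : ℝ) {T : ℝ} (hT : 0 ≤ T) :
    IntervalIntegrable (fun t => dgam p t / gam p t ^ 2 *
        (((t + gam p t) ^ 2 - 2 * a * (t + gam p t)) / 2)) volume 0 T ∧
      ∫ t in (0 : ℝ)..T, dgam p t / gam p t ^ 2 *
        (((t + gam p t) ^ 2 - 2 * a * (t + gam p t)) / 2) =
      -((T + gam p T) ^ 2 - 2 * a * (T + gam p T)) / (2 * gam p T) + (p - 1) * T ^ p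
        + T + gam p T - a * p * T ^ (p - 1) - gam p 0 / 2 - a := by
  have hcg : ContinuousOn (gam p) (Icc 0 T) := (continuousOn_gam hp1).mono Icc_subset_Ici_self
  have hne : ∀ t ∈ Icc 0 T, gam p t ≠ 0 := fun t ht => (gam_pos hp1 ht.1).ne'
  have hcφ : ContinuousOn (fun t => t + gam p t) (Icc 0 T) := continuousOn_id.add hcg
  have hI : IntervalIntegrable (fun t => dgam p t / gam p t ^ 2) volume 0 T := by
    rw [intervalIntegrable_iff_integrableOn_Ioc_of_le hT]
    exact (tail_integral hp1 hp2 le_rfl).1.mono_set Ioc_subset_Ioi_self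
  have hcV : ContinuousOn (fun t => ((t + gam p t) ^ 2 - 2 * a * (t + gam p t)) / 2) (Icc 0 T) :=
    ((hcφ.pow 2).sub (continuousOn_const.mul hcφ)).div_const 2
  have hI2 := hI.mul_continuousOn (by rwa [uIcc_of_le hT])
  refine ⟨hI2, ?_⟩
  have hcF : ContinuousOn (fun t => -(gam p t)⁻¹ *
      (((t + gam p t) ^ 2 - 2 * a * (t + gam p t)) / 2) +
      ((p - 1) * t ^ p + (t + gam p t) - a * p * t ^ (p - 1))) (Icc 0 T) := by
    refine ((hcg.inv₀ hne).neg.mul hcV).add (((continuousOn_const.mul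
      (Real.continuous_rpow_const (by linarith)).continuousOn).add hcφ).sub
      (continuousOn_const.mul (continuous_rpow_sub_one hp1).continuousOn))
  rw [intervalIntegral.integral_eq_sub_of_hasDerivAt_of_le hT hcF ?_ hI2]
  · have hg0 := (gam_pos hp1 le_rfl).ne'
    have hgT := (gam_pos hp1 hT).ne'
    rw [Real.zero_rpow (by linarith : p ≠ 0), Real.zero_rpow (by linarith : p - 1 ≠ 0)]
    field_simp
    ring
  · intro t ht
    have hg := (gam_pos hp1 ht.1.le).ne'
    have hφ : HasDerivAt (fun t => t + gam p t) (1 + (p * (p - 1) * t ^ (p - 2) * gam p t - 1)) t :=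
      (hasDerivAt_id t).add (hasDerivAt_gam hp1 ht.1)
    have h1 : HasDerivAt (fun s : ℝ => s ^ (p - 1)) ((p - 1) * t ^ (p - 1 - 1)) t :=
      Real.hasDerivAt_rpow_const (Or.inl ht.1.ne')
    have h2 : HasDerivAt (fun s : ℝ => s ^ p) (p * t ^ (p - 1)) t :=
      Real.hasDerivAt_rpow_const (Or.inl ht.1.ne')
    have h3 : t ^ (p - 1) = t ^ (p - 2) * t := by
      rw [← Real.rpow_add_one ht.1.ne']; congr 1; ring
    refine (((tail_hasDerivAt hp1 ht.1).mul
      (((hφ.pow 2).sub (hφ.const_mul (2 * a))).div_const 2)).add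
      (((h2.const_mul (p - 1)).add hφ).sub (h1.const_mul (a * p)))).congr_deriv ?_
    rw [show p - 1 - 1 = p - 2 by ring, h3]
    simp only [Nat.cast_ofNat, Pi.sub_apply, Pi.pow_apply]
    field_simp
    ring

lemma deriv_add_gam_pos {p : ℝ} (hp1 : 1 < p) {t : ℝ} (ht : 0 < t) :
    0 < p * (p - 1) * t ^ (p - 2) * gam p t := by
  have := gam_pos hp1 ht.le
  have : 0 < p - 1 := by linarith
  positivity

lemma hasDerivAt_add_gam {p : ℝ} (hp1 : 1 < p) {t : ℝ} (ht : 0 < t) :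
    HasDerivAt (fun t => t + gam p t) (p * (p - 1) * t ^ (p - 2) * gam p t) t :=
  ((hasDerivAt_id t).add (hasDerivAt_gam hp1 ht)).congr_deriv (by ring)

lemma strictMonoOn_add_gam {p : ℝ} (hp1 : 1 < p) :
    StrictMonoOn (fun t => t + gam p t) (Ici 0) := by
  refine strictMonoOn_of_deriv_pos (convex_Ici 0) (continuousOn_id.add (continuousOn_gam hp1)) ?_
  intro t ht
  rw [interior_Ici] at ht
  rw [(hasDerivAt_add_gam hp1 ht).deriv]
  exact deriv_add_gam_pos hp1 ht

/-- No regularity of `H` is assumed: its differentiability comes from the inverse function theorem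
applied to the continuously differentiable function `t ↦ t + γ t`. -/
lemma hasDerivAt_inverse {p : ℝ} (hp1 : 1 < p) {H : ℝ → ℝ}
    (hH : ∀ t : ℝ, 0 ≤ t → H (t + gam p t) = t) {t : ℝ} (ht : 0 < t) :
    HasDerivAt H (p * (p - 1) * t ^ (p - 2) * gam p t)⁻¹ (t + gam p t) := by
  have hs : HasStrictDerivAt (fun t => t + gam p t) (p * (p - 1) * t ^ (p - 2) * gam p t) t := by
    refine hasStrictDerivAt_of_hasDerivAt_of_continuousAt
      (f' := fun t => p * (p - 1) * t ^ (p - 2) * gam p t) ?_ ?_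
    · filter_upwards [Ioi_mem_nhds ht] with s hs using hasDerivAt_add_gam hp1 hs
    · exact (continuousAt_const.mul (Real.continuousAt_rpow_const _ _ (Or.inl ht.ne'))).mul
        (hasDerivAt_gam hp1 ht).continuousAt
  refine (hs.to_local_left_inverse (deriv_add_gam_pos hp1 ht).ne' ?_).hasDerivAt
  filter_upwards [Ioi_mem_nhds ht] with s hs using hH s (le_of_lt hs)

lemma sq_mul_uOne {n : ℕ} (x y : EuclideanSpace ℝ (Fin n)) {l : ℝ} (hl : 0 < l) :
    l ^ 2 * uOne (l⁻¹ • x) (l⁻¹ • y) =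
      if ‖x‖ + ‖y‖ ≤ l then ‖y‖ ^ 2 - ‖x‖ ^ 2 else l ^ 2 - 2 * ‖x‖ * l := by
  have h : l⁻¹ * ‖x‖ + l⁻¹ * ‖y‖ ≤ 1 ↔ ‖x‖ + ‖y‖ ≤ l := by
    rw [← mul_add, inv_mul_le_iff₀ hl, mul_one]
  simp only [uOne, norm_smul, norm_inv, Real.norm_of_nonneg hl.le, h]
  split_ifs <;> field_simp

/-- The integral defining `U` after the substitution `l = t + γ t`. -/
lemma integral_subst {p : ℝ} (hp1 : 1 < p) {n : ℕ} {H : ℝ → ℝ}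
    (hH₁ : ∀ t : ℝ, 0 ≤ t → H (t + gam p t) = t)
    (hH₂ : ∀ l : ℝ, gam p 0 ≤ l → 0 ≤ H l ∧ H l + gam p (H l) = l)
    (x y : EuclideanSpace ℝ (Fin n)) :
    (∫ l in Ioi (0 : ℝ),
        (if gam p 0 ≤ l then
            (1 / 2) * (gam p (H l)) ^ (-2 : ℝ) * deriv (gam p) (H l) * deriv H l * l ^ 2
          else 0) * uOne (l⁻¹ • x) (l⁻¹ • y)) =
      ∫ t in Ioi (0 : ℝ), dgam p t / gam p t ^ 2 *
        ((if ‖x‖ + ‖y‖ ≤ t + gam p t then ‖y‖ ^ 2 - ‖x‖ ^ 2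
          else (t + gam p t) ^ 2 - 2 * ‖x‖ * (t + gam p t)) / 2) := by
  have hg0 := gam_pos hp1 le_rfl
  have hmono := strictMonoOn_add_gam hp1
  have hgt : ∀ t ∈ Ioi (0 : ℝ), gam p 0 < t + gam p t := fun t ht => by
    simpa using hmono (mem_Ici.2 le_rfl) (mem_Ici.2 (le_of_lt ht)) ht
  have himg : (fun t => t + gam p t) '' Ioi 0 = Ioi (gam p 0) := by
    ext l
    constructor
    · rintro ⟨t, ht, rfl⟩
      exact hgt t ht
    · intro hl
      obtain ⟨h0, h1⟩ := hH₂ l (le_of_lt hl)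
      refine ⟨H l, lt_of_le_of_ne h0 fun h => ?_, h1⟩
      rw [← h, zero_add] at h1
      exact (ne_of_gt hl) h1.symm
  rw [setIntegral_eq_of_subset_of_forall_sdiff_eq_zero (s := Ici (gam p 0)) measurableSet_Ioi
    (fun l hl => lt_of_lt_of_le hg0 hl)
    (fun l hl => by rw [if_neg (fun h : gam p 0 ≤ l => hl.2 h), zero_mul]), integral_Ici_eq_integral_Ioi, ← himg,
    integral_image_eq_integral_abs_deriv_smul measurableSet_Ioi
      (fun t ht => (hasDerivAt_add_gam hp1 ht).hasDerivWithinAt)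
      (hmono.injOn.mono Ioi_subset_Ici_self)]
  refine setIntegral_congr_fun measurableSet_Ioi fun t ht => ?_
  have ht0 : 0 < t := ht
  have hg := gam_pos hp1 ht0.le
  have hφ := deriv_add_gam_pos hp1 ht0
  rw [if_pos (hgt t ht).le, hH₁ t ht0.le, (hasDerivAt_gam hp1 ht0).deriv,
    (hasDerivAt_inverse hp1 hH₁ ht0).deriv, ← sq_mul_uOne x y (by positivity : 0 < t + gam p t),
    abs_of_pos hφ, smul_eq_mul, Real.rpow_neg hg.le, Real.rpow_ofNat, dgam]
  generalize p * (p - 1) * t ^ (p - 2) * gam p t = d at hφ ⊢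
  have hd := hφ.ne'
  field_simp

/-- Explicit formula for the special weak-type function
`U(x,y) = ∫₀^∞ α(λ) u₁(x/λ, y/λ) dλ + γ(0)/2`, where
`α(λ) = (1/2) γ(H(λ))^{−2} γ′(H(λ)) H′(λ) λ²` for `λ ≥ γ(0)` and `α(λ) = 0`
for `0 < λ < γ(0)`, and `H : [γ(0),∞) → [0,∞)` is the inverse of `t ↦ t + γ(t)`. -/
theorem stmt_12 (p : ℝ) (hp1 : 1 < p) (hp2 : p < 2) (n : ℕ) (hn : 1 ≤ n)
    (H : ℝ → ℝ)
    (hH₁ : ∀ t : ℝ, 0 ≤ t → H (t + gam p t) = t)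
    (hH₂ : ∀ l : ℝ, gam p 0 ≤ l → 0 ≤ H l ∧ H l + gam p (H l) = l)
    (x y : EuclideanSpace ℝ (Fin n)) :
    (∫ l in Ioi (0 : ℝ),
        (if gam p 0 ≤ l then
            (1 / 2) * (gam p (H l)) ^ (-2 : ℝ) * deriv (gam p) (H l) * deriv H l * l ^ 2
          else 0) * uOne (l⁻¹ • x) (l⁻¹ • y)) + gam p 0 / 2
      = if ‖x‖ + ‖y‖ ≤ gam p 0 then
          (‖y‖ ^ 2 - ‖x‖ ^ 2) / (2 * gam p 0) + gam p 0 / 2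
        else
          ‖y‖ - H (‖x‖ + ‖y‖) ^ p -
            p * H (‖x‖ + ‖y‖) ^ (p - 1) * (‖x‖ - H (‖x‖ + ‖y‖)) := by
  rw [integral_subst hp1 hH₁ hH₂ x y]
  have hg0 := gam_pos hp1 le_rfl
  have hmono := strictMonoOn_add_gam hp1
  split_ifs with hr
  · rw [setIntegral_congr_fun (g := fun t => dgam p t / gam p t ^ 2 * ((‖y‖ ^ 2 - ‖x‖ ^ 2) / 2))
      measurableSet_Ioi, integral_mul_const, (tail_integral hp1 hp2 le_rfl).2]
    · field_simp
    · intro t ht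
      have h : gam p 0 < t + gam p t := by
        simpa using hmono (mem_Ici.2 le_rfl) (mem_Ici.2 (le_of_lt ht)) ht
      simp only
      rw [if_pos (hr.trans h.le)]
  · push Not at hr
    obtain ⟨hT, hTr⟩ := hH₂ _ hr.le
    generalize H (‖x‖ + ‖y‖) = T at hT hTr ⊢
    have hTpos : 0 < T := by
      refine lt_of_le_of_ne hT fun h => ?_
      rw [← h, zero_add] at hTr
      exact hr.ne hTr
    have hgT := gam_pos hp1 hT
    have htail : EqOn (fun t => dgam p t / gam p t ^ 2 *
        ((if ‖x‖ + ‖y‖ ≤ t + gam p t then ‖y‖ ^ 2 - ‖x‖ ^ 2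
          else (t + gam p t) ^ 2 - 2 * ‖x‖ * (t + gam p t)) / 2))
        (fun t => dgam p t / gam p t ^ 2 * ((‖y‖ ^ 2 - ‖x‖ ^ 2) / 2)) (Ioi T) := by
      intro t ht
      have h : T + gam p T < t + gam p t :=
        hmono (mem_Ici.2 hT) (mem_Ici.2 (hT.trans (le_of_lt ht))) ht
      simp only
      rw [if_pos (by linarith)]
    have hhead : EqOn (fun t => dgam p t / gam p t ^ 2 *
        ((if ‖x‖ + ‖y‖ ≤ t + gam p t then ‖y‖ ^ 2 - ‖x‖ ^ 2
          else (t + gam p t) ^ 2 - 2 * ‖x‖ * (t + gam p t)) / 2))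
        (fun t => dgam p t / gam p t ^ 2 *
          (((t + gam p t) ^ 2 - 2 * ‖x‖ * (t + gam p t)) / 2)) (Ioc 0 T) := by
      intro t ht
      have h : t + gam p t ≤ T + gam p T :=
        hmono.monotoneOn (mem_Ici.2 ht.1.le) (mem_Ici.2 hT) ht.2
      simp only
      split_ifs with h1
      -- Only `t = T` remains, where both expressions for `V` agree.
      · have h2 : t + gam p t = ‖x‖ + ‖y‖ := by linarith
        rw [h2]; ring
      · rfl
    obtain ⟨hi1, he1⟩ := head_integral hp1 hp2 ‖x‖ hT
    obtain ⟨hi2, he2⟩ := tail_integral hp1 hp2 hT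
    rw [intervalIntegrable_iff_integrableOn_Ioc_of_le hT] at hi1
    rw [intervalIntegral.integral_of_le hT] at he1
    rw [← Ioc_union_Ioi_eq_Ioi hT, setIntegral_union Ioc_disjoint_Ioi_same measurableSet_Ioi
      (hi1.congr_fun hhead.symm measurableSet_Ioc)
      (IntegrableOn.congr_fun (hi2.mul_const _) htail.symm measurableSet_Ioi),
      setIntegral_congr_fun measurableSet_Ioc hhead, setIntegral_congr_fun measurableSet_Ioi htail,
      integral_mul_const, he1, he2, hTr]
    have hpow : T ^ p = T ^ (p - 1) * T := by
      rw [← Real.rpow_add_one hTpos.ne']; congr 1; ring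
    have hsum : gam p T = ‖x‖ + ‖y‖ - T := by linarith
    have key : -((‖x‖ + ‖y‖) ^ 2 - 2 * ‖x‖ * (‖x‖ + ‖y‖)) / (2 * gam p T)
        + (gam p T)⁻¹ * ((‖y‖ ^ 2 - ‖x‖ ^ 2) / 2) = 0 := by
      field_simp
      ring
    rw [hpow]
    linear_combination key + hsum
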